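/- For a Čech-complete Lindelöf space X, the following are equivalent: (i) C_p(X) is Ascoli; (ii) C_p(X) is Fréchet–Urysohn; (iii) X is scattered; (iv) X is scattered and σ-compact. -/

import Mathlib

open Topology Filter

abbrev Cp (X : Type*) [TopologicalSpace X] : Type _ := {f : X → ℝ // Continuous f}

def IsAscoli (Y : Type*) [TopologicalSpace Y] : Prop :=
  ∀ K : Set C(Y, ℝ), IsCompact K → Continuous fun p : Y × K => (p.2 : C(Y, ℝ)) p.1

def CechComplete (X : Type u) [TopologicalSpace X] : Prop :=
  ∃ (Y : Type u) (_ : TopologicalSpace Y) (_ : CompactSpace Y) (_ : T2Space Y)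
    (e : X → Y), IsEmbedding e ∧ Dense (Set.range e) ∧ IsGδ (Set.range e)

def IsScattered (X : Type*) [TopologicalSpace X] : Prop :=
  ∀ A : Set X, A.Nonempty → ∃ a ∈ A, ∃ U : Set X, IsOpen U ∧ U ∩ A = {a}

/-!
In a scattered Lindelöf space every cover by `Gδ` sets has a countable subcover. Covering by `Gδ`
sets that lie in compact sets yields σ-compactness; covering by the fibres of the joint evaluation
map of countably many functions shows that these take only countably many joint values, so countable
subspaces of `C_p(X)` are first countable. When the finite powers of `X` are Lindelöf, `C_p(X)` is
countably tight, hence Fréchet–Urysohn, hence compactly generated, hence Ascoli.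

If a Čech-complete `X` is not scattered, a Cantor scheme in a compactification, shrinking into the
open sets that define `X`, produces a compact subset of `X` mapping onto the Cantor set; pass to a
closed subset `E` on which this map is irreducible. The points `t⌢true⌢false⌢false⌢…` with
`t` of length `n` form finite sets whose unions over infinite sets of indices `n` are dense, and by
irreducibility so are the unions of their lifts `F n` to `E`. If `C_p(X)` were Ascoli, some compact
`C ⊆ C_p(X)` would contain, for infinitely many `n`, a function exceeding `n` on `F n`; so for each
`m` the open set of points of `E` where some `g ∈ C` exceeds `m` would be dense, and by the Baire
category theorem `C` would be unbounded at some point.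
-/

section Scattered

variable {X : Type*} [TopologicalSpace X] [RegularSpace X] [LindelofSpace X]

theorem IsScattered.induction_on (hs : IsScattered X) {p : Set X → Prop}
    (hmono : ∀ ⦃S T⦄, S ⊆ T → p T → p S)
    (hcountable_union : ∀ T : Set (Set X), T.Countable → (∀ S ∈ T, p S) → p (⋃₀ T))
    (hGδ : ∀ x, ∃ W, IsGδ W ∧ x ∈ W ∧ p W) : p Set.univ := by
  have of_isClosed : ∀ C, IsClosed C → (∀ x ∈ C, ∃ U ∈ 𝓝 x, p U) → p C := fun C hC h =>
    hC.isLindelof.induction_on hmono hcountable_union fun x hx =>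
      (h x hx).imp fun U hU => ⟨mem_nhdsWithin_of_mem_nhds hU.1, hU.2⟩
  let A : Set X := {x | ¬ ∃ U ∈ 𝓝 x, p U}
  suffices hA : A = ∅ from
    of_isClosed _ isClosed_univ fun x _ => not_not.1 (Set.eq_empty_iff_forall_notMem.1 hA x)
  by_contra! hne
  obtain ⟨a, haA, U, hU, hUA⟩ := hs A hne
  have haU : a ∈ U := (hUA.symm.subset rfl).1
  obtain ⟨Z, hZ, hZc, hZU⟩ := exists_mem_nhds_isClosed_subset (hU.mem_nhds haU)
  obtain ⟨W, hW, haW, hpW⟩ := hGδ a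
  obtain ⟨O, hO, rfl⟩ := hW.eq_iInter_nat
  have hZO : ∀ n, p (Z \ O n) := fun n => of_isClosed _ (hZc.sdiff (hO n)) fun x hx => by
    by_contra hxA
    have hxa : x = a := hUA.subset ⟨hZU hx.1, hxA⟩
    exact hx.2 (hxa ▸ Set.mem_iInter.1 haW n)
  refine haA ⟨Z, hZ, hmono ?_ (hcountable_union (insert (⋂ n, O n) (Set.range fun n => Z \ O n))
    ((Set.countable_range _).insert _) ?_)⟩
  · rw [Set.sUnion_insert, Set.sUnion_range, ← Set.sdiff_iInter, Set.union_sdiff_self]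
    exact Set.subset_union_right
  · rintro S (rfl | ⟨n, rfl⟩)
    exacts [hpW, hZO n]

theorem IsScattered.exists_countable_biUnion_eq_univ (hs : IsScattered X) {W : X → Set X}
    (hW : ∀ x, IsGδ (W x)) (hxW : ∀ x, x ∈ W x) :
    ∃ t : Set X, t.Countable ∧ ⋃ x ∈ t, W x = Set.univ := by
  simp only [← Set.univ_subset_iff]
  refine hs.induction_on (p := fun S => ∃ t : Set X, t.Countable ∧ S ⊆ ⋃ x ∈ t, W x) ?_ ?_ ?_
  · rintro S T hST ⟨t, ht, hTt⟩
    exact ⟨t, ht, hST.trans hTt⟩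
  · intro T hT h
    choose! t ht hTt using h
    refine ⟨⋃ S ∈ T, t S, hT.biUnion ht, Set.sUnion_subset fun S hS => (hTt S hS).trans ?_⟩
    exact Set.biUnion_subset_biUnion_left (Set.subset_biUnion_of_mem hS)
  · exact fun x => ⟨W x, hW x, hxW x, {x}, Set.countable_singleton x, by simp⟩

theorem IsScattered.countable_range (hs : IsScattered X) {M : Type*} [TopologicalSpace M]
    [FirstCountableTopology M] [T1Space M] {f : X → M} (hf : Continuous f) :
    (Set.range f).Countable := by
  obtain ⟨t, ht, htu⟩ := hs.exists_countable_biUnion_eq_univ (W := fun x => f ⁻¹' {f x})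
    (fun x => (IsGδ.singleton (f x)).preimage hf) fun _ => rfl
  refine (ht.image f).mono ?_
  rintro _ ⟨x, rfl⟩
  obtain ⟨y, hy, hxy⟩ := Set.mem_iUnion₂.1 (htu.symm.subset (Set.mem_univ x))
  exact ⟨y, hy, hxy.symm⟩

end Scattered

theorem CechComplete.exists_isGδ_subset_isCompact {X : Type u} [TopologicalSpace X]
    (hX : CechComplete X) (x : X) : ∃ G K : Set X, IsGδ G ∧ x ∈ G ∧ G ⊆ K ∧ IsCompact K := by
  obtain ⟨Y, _, _, _, e, he, -, hG⟩ := hX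
  obtain ⟨O, hO, hrange⟩ := hG.eq_iInter_nat
  have hx : ∀ n, e x ∈ O n := Set.mem_iInter.1 (hrange.subset ⟨x, rfl⟩)
  choose Z hZ hZc hZO using fun n => exists_mem_nhds_isClosed_subset ((hO n).mem_nhds (hx n))
  refine ⟨e ⁻¹' ⋂ n, interior (Z n), e ⁻¹' ⋂ n, Z n,
    (IsGδ.iInter_of_isOpen fun _ => isOpen_interior).preimage he.continuous,
    Set.mem_iInter.2 fun n => mem_interior_iff_mem_nhds.2 (hZ n),
    Set.preimage_mono (Set.iInter_mono fun _ => interior_subset),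
    he.isInducing.isCompact_preimage' (isClosed_iInter hZc).isCompact ?_⟩
  exact hrange ▸ Set.iInter_mono hZO

theorem IsScattered.sigmaCompactSpace {X : Type u} [TopologicalSpace X] [RegularSpace X]
    [LindelofSpace X] (hs : IsScattered X) (hX : CechComplete X) : SigmaCompactSpace X := by
  choose G K hG hxG hGK hK using hX.exists_isGδ_subset_isCompact
  obtain ⟨t, ht, htu⟩ := hs.exists_countable_biUnion_eq_univ hG hxG
  have hKu : ⋃ x ∈ t, K x = Set.univ :=
    Set.univ_subset_iff.1 (htu.symm.subset.trans (Set.iUnion₂_mono fun x _ => hGK x))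
  rw [← isSigmaCompact_univ_iff, ← hKu]
  exact isSigmaCompact_biUnion ht fun x _ => (hK x).isSigmaCompact

namespace Cp

variable {X : Type*} [TopologicalSpace X]

theorem continuous_eval (x : X) : Continuous fun g : Cp X => g.1 x :=
  (continuous_apply x).comp continuous_subtype_val

theorem hasBasis_nhds (f : Cp X) :
    (𝓝 f).HasBasis (fun p : Finset X × ℝ => 0 < p.2)
      fun p => {g | ∀ x ∈ p.1, dist (g.1 x) (f.1 x) < p.2} := by
  refine ⟨fun s => ⟨fun hs => ?_, ?_⟩⟩
  · rw [nhds_subtype_eq_comap, nhds_pi] at hs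
    obtain ⟨⟨I, ε⟩, ⟨hI, hε⟩, hs⟩ :=
      ((hasBasis_pi fun x => Metric.nhds_basis_ball (x := f.1 x)).comap _).mem_iff.1 hs
    have hle : ∀ᶠ δ in 𝓝[>] (0 : ℝ), ∀ x ∈ I, δ ≤ ε x := (eventually_all_finite hI).2 fun x hx =>
      (eventually_le_nhds (hε x hx)).filter_mono nhdsWithin_le_nhds
    obtain ⟨δ, hδε, hδ⟩ := (hle.and eventually_mem_nhdsWithin).exists
    refine ⟨(hI.toFinset, δ), hδ, fun g hg => hs fun x hx => ?_⟩
    exact (hg x (hI.mem_toFinset.2 hx)).trans_le (hδε x hx)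
  · rintro ⟨⟨I, ε⟩, hε, hs⟩
    refine mem_of_superset ((eventually_all_finset I).2 fun x _ => ?_) hs
    exact (continuous_eval x).continuousAt.eventually (Metric.ball_mem_nhds _ hε)

theorem exists_countable_forall_dist_lt {n : ℕ} [LindelofSpace (Fin n → X)] {A : Set (Cp X)}
    {f : Cp X} (hf : f ∈ closure A) {ε : ℝ} (hε : 0 < ε) :
    ∃ B ⊆ A, B.Countable ∧
      ∀ x : Fin n → X, ∃ g ∈ B, ∀ i, dist (g.1 (x i)) (f.1 (x i)) < ε := by
  classical
  have happrox : ∀ x : Fin n → X, ∃ g ∈ A, ∀ i, dist (g.1 (x i)) (f.1 (x i)) < ε := fun x => by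
    simpa using! (mem_closure_iff_nhds_basis (hasBasis_nhds f)).1 hf (Finset.univ.image x, ε) hε
  choose g hgA hg using happrox
  obtain ⟨t, ht, htu⟩ := LindelofSpace.elim_nhds_subcover
    (fun x : Fin n → X => {y | ∀ i, dist ((g x).1 (y i)) (f.1 (y i)) < ε}) fun x =>
      eventually_all.2 fun i => (((g x).2.comp (continuous_apply i)).dist
        (f.2.comp (continuous_apply i))).continuousAt.eventually_lt_const (hg x i)
  refine ⟨g '' t, Set.image_subset_iff.2 fun x _ => hgA x, ht.image g, fun y => ?_⟩
  obtain ⟨x, hx, hy⟩ := Set.mem_iUnion₂.1 (htu.symm.subset (Set.mem_univ y))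
  exact ⟨g x, ⟨x, hx, rfl⟩, hy⟩

theorem exists_countable_subset_mem_closure [∀ n, LindelofSpace (Fin n → X)] {A : Set (Cp X)}
    {f : Cp X} (hf : f ∈ closure A) : ∃ B ⊆ A, B.Countable ∧ f ∈ closure B := by
  choose B hBA hB hBf using fun n k : ℕ =>
    exists_countable_forall_dist_lt (n := n) hf (Nat.one_div_pos_of_nat (n := k))
  refine ⟨⋃ n, ⋃ k, B n k, Set.iUnion₂_subset hBA,
    Set.countable_iUnion fun n => Set.countable_iUnion (hB n), ?_⟩
  refine (mem_closure_iff_nhds_basis (hasBasis_nhds f)).2 fun ⟨I, ε⟩ hε => ?_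
  obtain ⟨k, hk⟩ := exists_nat_one_div_lt hε
  obtain ⟨g, hgB, hg⟩ := hBf I.card k fun i => I.equivFin.symm i
  refine ⟨g, Set.mem_iUnion₂.2 ⟨_, _, hgB⟩, fun x hx => ?_⟩
  simpa using! (hg (I.equivFin ⟨x, hx⟩)).trans hk

theorem firstCountableTopology_coe [RegularSpace X] [LindelofSpace X] (hs : IsScattered X)
    {B : Set (Cp X)} (hB : B.Countable) : FirstCountableTopology B := by
  have := hB.to_subtype
  let Φ : X → B → ℝ := fun x g => g.1.1 x
  have hΦ : Continuous Φ := continuous_pi fun g => g.1.2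
  have := (hs.countable_range hΦ).to_subtype
  let restrict : B → Set.range Φ → ℝ := fun g y => y.1 g
  let extend : (Set.range Φ → ℝ) → X → ℝ := fun u x => u ⟨Φ x, x, rfl⟩
  have hrestrict : Continuous restrict := by
    refine continuous_pi ?_
    rintro ⟨_, x, rfl⟩
    exact (continuous_eval x).comp continuous_subtype_val
  have hextend : Continuous extend := continuous_pi fun x => continuous_apply _
  have hinducing : IsInducing (extend ∘ restrict) :=
    IsInducing.subtypeVal.comp IsInducing.subtypeVal
  exact (hinducing.of_comp hrestrict hextend).firstCountableTopology

theorem frechetUrysohnSpace [RegularSpace X] [∀ n, LindelofSpace (Fin n → X)]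
    (hs : IsScattered X) : FrechetUrysohnSpace (Cp X) := by
  have : LindelofSpace X := (Homeomorph.funUnique (Fin 1) X).symm.isClosedEmbedding.LindelofSpace
  refine ⟨fun A f hf => ?_⟩
  obtain ⟨B, hBA, hB, hfB⟩ := exists_countable_subset_mem_closure hf
  have := firstCountableTopology_coe hs (hB.insert f)
  have hf' : (⟨f, Set.mem_insert f B⟩ : ↥(insert f B)) ∈ closure (Subtype.val ⁻¹' B) := by
    rwa [closure_subtype, Subtype.image_preimage_coe,
      Set.inter_eq_right.2 (Set.subset_insert f B)]
  obtain ⟨u, huB, hu⟩ := mem_closure_iff_seq_limit.1 hf'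
  exact ⟨fun n => u n, fun n => hBA (huB n), (continuous_subtype_val.tendsto _).comp hu⟩

end Cp

theorem isAscoli_of_compactlyGeneratedSpace (Y : Type*) [TopologicalSpace Y]
    [CompactlyGeneratedSpace Y] : IsAscoli Y := by
  intro K hK
  have := isCompact_iff_compactSpace.1 hK
  let eval : Y → C(K, ℝ) := fun y =>
    ⟨fun f => f.1 y, (ContinuousEvalConst.continuous_eval_const y).comp continuous_subtype_val⟩
  have heval : Continuous eval := by
    refine continuous_from_compactlyGeneratedSpace _ fun S _ _ _ g hg => ?_
    refine ContinuousMap.continuous_of_continuous_uncurry _ ?_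
    have hcomp : Continuous fun f : K => f.1.comp ⟨g, hg⟩ :=
      (ContinuousMap.continuous_precomp _).comp continuous_subtype_val
    exact (hcomp.comp continuous_snd).eval continuous_fst
  exact (heval.comp continuous_fst).eval continuous_snd

theorem IsAscoli.tendsto_uncurry {Y : Type*} [TopologicalSpace Y] (h : IsAscoli Y)
    {φ : ℕ → C(Y, ℝ)} {f : C(Y, ℝ)} (hφ : Tendsto φ atTop (𝓝 f)) (y : Y) :
    Tendsto (fun p : Y × ℕ => φ p.2 p.1) (𝓝 y ×ˢ atTop) (𝓝 (f y)) := by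
  let K : Set C(Y, ℝ) := insert f (Set.range φ)
  let k : ℕ → K := fun n => ⟨φ n, Set.mem_insert_of_mem _ ⟨n, rfl⟩⟩
  have hk : Tendsto k atTop (𝓝 ⟨f, Set.mem_insert _ _⟩) := tendsto_subtype_rng.2 hφ
  have heval := (h K hφ.isCompact_insert_range).tendsto (y, ⟨f, Set.mem_insert _ _⟩)
  rw [nhds_prod_eq] at heval
  exact heval.comp (tendsto_id.prodMap hk)

theorem exists_continuousMap_eqOn_zero_one {X : Type*} [TopologicalSpace X] [T35Space X]
    {S T : Set X} (hS : IsCompact S) (hT : IsCompact T) (hST : Disjoint S T) :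
    ∃ f : C(X, ℝ), Set.EqOn f 0 S ∧ Set.EqOn f 1 T := by
  obtain ⟨f, hf0, hf1, -⟩ := exists_continuous_zero_one_of_isClosed
    (hS.image continuous_stoneCechUnit).isClosed (hT.image continuous_stoneCechUnit).isClosed
    ((Set.disjoint_image_iff injective_stoneCechUnit_of_t35Space).2 hST)
  exact ⟨f.comp ⟨stoneCechUnit, continuous_stoneCechUnit⟩,
    fun x hx => hf0 ⟨x, hx, rfl⟩, fun x hx => hf1 ⟨x, hx, rfl⟩⟩

section AscoliCp

variable {X : Type*} [TopologicalSpace X]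

/-- The functional `g ↦ ∏ x ∈ F, (g x - c)⁺` on `C_p(X)`, a continuous test for `g > c` on `F`. -/
def Cp.excessProd (c : ℝ) (F : Finset X) : C(Cp X, ℝ) where
  toFun g := ∏ x ∈ F, max 0 (g.1 x - c)
  continuous_toFun := continuous_finsetProd _ fun x _ =>
    continuous_const.max ((Cp.continuous_eval x).sub continuous_const)

theorem IsAscoli.exists_isCompact_frequently_lt [T35Space X] (h : IsAscoli (Cp X))
    {F : ℕ → Finset X} (hF : ∀ x, ∀ᶠ n in atTop, x ∉ F n) :
    ∃ C : Set (Cp X), IsCompact C ∧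
      ∃ᶠ n : ℕ in atTop, ∃ g ∈ C, ∀ x ∈ F n, (n : ℝ) < g.1 x := by
  by_contra! hcon
  -- Compact sets do not see the functionals, but every neighbourhood of `0` in `C_p(X)` does.
  have hzero : Tendsto (fun n : ℕ => Cp.excessProd n (F n)) atTop (𝓝 0) := by
    rw [ContinuousMap.tendsto_nhds_compactOpen]
    intro C hC U _ hCU
    filter_upwards [hcon C hC] with n hn g hg
    obtain ⟨x, hxF, hx⟩ := hn g hg
    have hvanish : Cp.excessProd n (F n) g = 0 :=
      Finset.prod_eq_zero hxF (max_eq_left (sub_nonpos.2 hx))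
    exact hvanish ▸ hCU hg
  let zero : Cp X := ⟨fun _ => 0, continuous_const⟩
  have hlt := (h.tendsto_uncurry hzero zero).eventually_lt_const zero_lt_one
  obtain ⟨⟨⟨I, ε⟩, N⟩, ⟨hε, -⟩, hIN⟩ :=
    ((Cp.hasBasis_nhds zero).prod atTop_basis).eventually_iff.1 hlt
  have hdisj : ∀ᶠ n in atTop, Disjoint (I : Set X) (F n) := by
    simpa only [Set.disjoint_left] using! (eventually_all_finset I).2 fun x _ => hF x
  obtain ⟨n, hnI, hnN⟩ := (hdisj.and (eventually_ge_atTop N)).exists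
  obtain ⟨f, hf0, hf1⟩ := exists_continuousMap_eqOn_zero_one
    I.finite_toSet.isCompact (F n).finite_toSet.isCompact hnI
  let g : Cp X := ⟨fun x => (n + 1) * f x, continuous_const.mul f.continuous⟩
  have hgI : ∀ x ∈ I, dist (g.1 x) (zero.1 x) < ε := fun x hx => by
    simpa [g, zero, hf0 hx] using hε
  have hgF : Cp.excessProd n (F n) g = 1 :=
    Finset.prod_eq_one fun x hx => by simp [g, hf1 hx]
  exact (@hIN (g, n) ⟨hgI, hnN⟩).ne hgF

variable {E : Type*} [TopologicalSpace E] [BaireSpace E] [Nonempty E] {r : E → X}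

theorem Cp.exists_not_dense_of_isCompact {C : Set (Cp X)} (hC : IsCompact C)
    (hr : Continuous r) : ∃ m : ℕ, ¬ Dense {z | ∃ g ∈ C, (m : ℝ) < g.1 (r z)} := by
  by_contra! hdense
  have hopen : ∀ m : ℕ, IsOpen {z | ∃ g ∈ C, (m : ℝ) < g.1 (r z)} := fun m => by
    have heq : {z | ∃ g ∈ C, (m : ℝ) < g.1 (r z)} = ⋃ g ∈ C, {z | (m : ℝ) < g.1 (r z)} := by
      ext; simp
    rw [heq]
    exact isOpen_biUnion fun g _ => isOpen_lt continuous_const (g.2.comp hr)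
  obtain ⟨z, hz⟩ := (dense_iInter_of_isOpen_nat hopen hdense).nonempty
  obtain ⟨M, hM⟩ := (hC.image (Cp.continuous_eval (r z))).bddAbove
  obtain ⟨m, hm⟩ := exists_nat_ge M
  obtain ⟨g, hgC, hg⟩ := Set.mem_iInter.1 hz m
  exact (hg.trans_le (hM ⟨g, hgC, rfl⟩)).not_ge hm

theorem IsAscoli.exists_infinite_not_dense [T35Space X] (h : IsAscoli (Cp X))
    (hr : Continuous r) {F : ℕ → Finset X} (hF : ∀ x, ∀ᶠ n in atTop, x ∉ F n) :
    ∃ I : Set ℕ, I.Infinite ∧ ¬ Dense (r ⁻¹' ⋃ n ∈ I, F n) := by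
  obtain ⟨C, hC, hfreq⟩ := h.exists_isCompact_frequently_lt hF
  obtain ⟨m, hm⟩ := Cp.exists_not_dense_of_isCompact hC hr
  refine ⟨{n : ℕ | (∃ g ∈ C, ∀ x ∈ F n, (n : ℝ) < g.1 x) ∧ m ≤ n},
    Nat.frequently_atTop_iff_infinite.1 (hfreq.and_eventually (eventually_ge_atTop m)),
    fun hdense => hm (hdense.mono fun z hz => ?_)⟩
  obtain ⟨n, ⟨⟨g, hgC, hg⟩, hmn⟩, hzn⟩ := Set.mem_iUnion₂.1 hz
  exact ⟨g, hgC, (Nat.cast_le.2 hmn).trans_lt (hg _ hzn)⟩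

end AscoliCp

section BranchGraph

open PiNat

variable {β Y : Type*} {A : List β → Set Y}

/-- The pairs of a point of `Y` and a branch of the scheme `A` all of whose sets contain the point.
For a disjoint scheme it is the graph of the partial map from points to branches. -/
def branchGraph (A : List β → Set Y) : Set (Y × (ℕ → β)) :=
  {z | ∀ n, z.1 ∈ A (res z.2 n)}

theorem injOn_fst_branchGraph (hA : CantorScheme.Disjoint A) :
    Set.InjOn Prod.fst (branchGraph A) := by
  rintro ⟨y, x⟩ hx ⟨_, x'⟩ hx' rfl
  suffices ∀ n, res x n = res x' n from Prod.ext rfl (res_injective (funext this))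
  intro n
  induction n with
  | zero => rfl
  | succ n ih =>
    have hy : y ∈ A (x n :: res x n) := hx (n + 1)
    have hy' : y ∈ A (x' n :: res x n) := ih ▸ hx' (n + 1)
    have heq : x n = x' n := by
      by_contra hne
      exact Set.disjoint_left.1 (hA (res x n) hne) hy hy'
    rw [res_succ, res_succ, ih, heq]

variable [TopologicalSpace Y]

theorem isClosed_branchGraph [TopologicalSpace β] [DiscreteTopology β]
    (hA : ∀ l, IsClosed (A l)) : IsClosed (branchGraph A) := by
  have heq : branchGraph A = ⋂ n, {z | z.1 ∈ A (res z.2 n)} := by ext; simp [branchGraph]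
  rw [heq]
  refine isClosed_iInter fun n => ⟨isOpen_iff_mem_nhds.2 fun z hz => ?_⟩
  filter_upwards [prod_mem_nhds ((hA _).isOpen_compl.mem_nhds hz)
    ((isOpen_cylinder _ z.2 n).mem_nhds (self_mem_cylinder z.2 n))] with w hw
  rw [cylinder_eq_res] at hw
  exact fun hwA => hw.1 (hw.2 ▸ hwA)

theorem exists_mem_branchGraph [CompactSpace Y] (hA : CantorScheme.Antitone A)
    (hclosed : ∀ l, IsClosed (A l)) (hne : ∀ l, (A l).Nonempty) (x : ℕ → β) :
    ∃ y, (y, x) ∈ branchGraph A := by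
  obtain ⟨y, hy⟩ := IsCompact.nonempty_iInter_of_sequence_nonempty_isCompact_isClosed
    (fun n => A (res x n)) (fun n => hA _ _) (fun n => hne _) (hclosed _).isCompact
    fun n => hclosed _
  exact ⟨y, Set.mem_iInter.1 hy⟩

end BranchGraph

theorem exists_splitting_of_preperfect {Y : Type*} [TopologicalSpace Y] [T3Space Y] {B V : Set Y}
    (hB : Preperfect B) (hV : IsOpen V) (hVB : (V ∩ B).Nonempty) :
    ∃ W : Bool → Set Y, (∀ b, IsOpen (W b) ∧ (W b ∩ B).Nonempty ∧ closure (W b) ⊆ V) ∧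
      Pairwise fun b c => Disjoint (closure (W b)) (closure (W c)) := by
  obtain ⟨y, hyV, hyB⟩ := hVB
  obtain ⟨z, ⟨hzV, hzB⟩, hzy⟩ := preperfect_iff_nhds.1 hB y hyB V (hV.mem_nhds hyV)
  obtain ⟨S, hyS, hS, T, hzT, hT, hST⟩ := exists_open_nhds_disjoint_closure hzy.symm
  have hshrink : ∀ a ∈ V ∩ B, ∀ U, IsOpen U → a ∈ U →
      ∃ W, IsOpen W ∧ (W ∩ B).Nonempty ∧ closure W ⊆ V ∧ W ⊆ U := by
    rintro a ⟨haV, haB⟩ U hU haU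
    obtain ⟨Z, hZ, hZc, hZs⟩ := exists_mem_nhds_isClosed_subset
      ((hV.inter hU).mem_nhds ⟨haV, haU⟩)
    exact ⟨interior Z, isOpen_interior, ⟨a, mem_interior_iff_mem_nhds.2 hZ, haB⟩,
      (closure_minimal interior_subset hZc).trans (hZs.trans Set.inter_subset_left),
      interior_subset.trans (hZs.trans Set.inter_subset_right)⟩
  obtain ⟨W₀, hW₀, hW₀B, hW₀V, hW₀S⟩ := hshrink y ⟨hyV, hyB⟩ S hS hyS
  obtain ⟨W₁, hW₁, hW₁B, hW₁V, hW₁T⟩ := hshrink z ⟨hzV, hzB⟩ T hT hzT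
  refine ⟨fun b => bif b then W₁ else W₀, ?_, ?_⟩
  · rintro (_ | _)
    exacts [⟨hW₀, hW₀B, hW₀V⟩, ⟨hW₁, hW₁B, hW₁V⟩]
  · have hdisj : Disjoint (closure W₀) (closure W₁) :=
      hST.mono (closure_mono hW₀S) (closure_mono hW₁T)
    rintro (_ | _) (_ | _) hbc
    exacts [absurd rfl hbc, hdisj, hdisj.symm, absurd rfl hbc]

theorem exists_cantorScheme_of_preperfect {Y : Type*} [TopologicalSpace Y] [T3Space Y] {B : Set Y}
    (hB : Preperfect B) (hne : B.Nonempty) {O : ℕ → Set Y} (hO : ∀ n, IsOpen (O n))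
    (hBO : ∀ n, B ⊆ O n) :
    ∃ A : List Bool → Set Y, (∀ l, IsClosed (A l)) ∧ (∀ l, (A l).Nonempty) ∧
      CantorScheme.Antitone A ∧ CantorScheme.Disjoint A ∧ ∀ b l, A (b :: l) ⊆ O l.length := by
  let S := {V : Set Y // IsOpen V ∧ (V ∩ B).Nonempty}
  have hsplit : ∀ (n : ℕ) (V : S), ∃ W : Bool → S, (∀ b, closure (W b).1 ⊆ V.1 ∩ O n) ∧
      Pairwise fun b c => Disjoint (closure (W b).1) (closure (W c).1) := by
    rintro n ⟨V, hV, hVB⟩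
    obtain ⟨W, hW, hdisj⟩ := exists_splitting_of_preperfect hB (hV.inter (hO n))
      (hVB.mono fun y hy => ⟨⟨hy.1, hBO n hy.2⟩, hy.2⟩)
    exact ⟨fun b => ⟨W b, (hW b).1, (hW b).2.1⟩, fun b => (hW b).2.2, hdisj⟩
  choose W hWV hWdisj using hsplit
  let V : List Bool → S := fun l =>
    l.rec ⟨Set.univ, isOpen_univ, by rwa [Set.univ_inter]⟩ fun b l V => W l.length V b
  have hV : ∀ b l, closure (V (b :: l)).1 ⊆ (V l).1 ∩ O l.length := fun b l => hWV _ _ b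
  refine ⟨fun l => closure (V l).1, fun l => isClosed_closure,
    fun l => (V l).2.2.mono (Set.inter_subset_left.trans subset_closure),
    fun l b => (hV b l).trans (Set.inter_subset_left.trans subset_closure),
    fun l => hWdisj _ _, fun b l => (hV b l).trans Set.inter_subset_right⟩

theorem exists_preperfect_of_not_isScattered {X : Type*} [TopologicalSpace X]
    (hX : ¬ IsScattered X) : ∃ A : Set X, A.Nonempty ∧ Preperfect A := by
  unfold IsScattered at hX
  push Not at hX
  obtain ⟨A, hne, hA⟩ := hX
  refine ⟨A, hne, preperfect_iff_nhds.2 fun a ha U hU => ?_⟩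
  by_contra! hisolated
  refine hA a ha (interior U) isOpen_interior (Set.Subset.antisymm ?_ ?_)
  · exact fun y hy => hisolated y ⟨interior_subset hy.1, hy.2⟩
  · exact Set.singleton_subset_iff.2 ⟨mem_interior_iff_mem_nhds.2 hU, ha⟩

theorem CechComplete.exists_isCompact_surjective_of_not_isScattered {X : Type u}
    [TopologicalSpace X] (hX : CechComplete X) (hns : ¬ IsScattered X) :
    ∃ K : Set X, IsCompact K ∧ ∃ q : K → ℕ → Bool, Continuous q ∧ Function.Surjective q := by
  obtain ⟨Y, _, _, _, e, he, -, hG⟩ := hX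
  obtain ⟨O, hO, hrange⟩ := hG.eq_iInter_nat
  obtain ⟨B, hBne, hB⟩ := exists_preperfect_of_not_isScattered hns
  have heB : Preperfect (e '' B) := by
    rintro _ ⟨b, hb, rfl⟩
    simpa only [map_principal] using (hB b hb).map he.continuous.continuousAt he.injective
  obtain ⟨A, hclosed, hne, hanti, hdisj, hAO⟩ := exists_cantorScheme_of_preperfect heB
    (hBne.image e) hO fun n => (Set.image_subset_range e B).trans (hrange ▸ Set.iInter_subset O n)
  have := isCompact_iff_compactSpace.1 (isClosed_branchGraph hclosed).isCompact
  have hmem : ∀ z : branchGraph A, ∃ x, e x = z.1.1 := fun z => by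
    refine hrange.symm.subset (Set.mem_iInter.2 fun n => ?_)
    simpa using! hAO _ _ (z.2 (n + 1))
  choose p hp using hmem
  have hpc : Continuous p := by
    rw [he.continuous_iff, show e ∘ p = fun z => z.1.1 from funext hp]
    exact continuous_fst.comp continuous_subtype_val
  have hpi : Function.Injective p := fun z w hzw =>
    Subtype.ext (injOn_fst_branchGraph hdisj z.2 w.2 (by rw [← hp, ← hp, hzw]))
  have := he.t2Space
  let homeo := (hpc.isClosedEmbedding hpi).isEmbedding.toHomeomorph
  refine ⟨Set.range p, isCompact_range hpc, fun k => (homeo.symm k).1.2, by fun_prop, fun x => ?_⟩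
  obtain ⟨y, hy⟩ := exists_mem_branchGraph hanti hclosed hne x
  exact ⟨homeo ⟨(y, x), hy⟩, by simp⟩

section WordPoint

/-- The point of the Cantor set with prefix `t`, then a `true`, then `false` forever. The `true`
marks the length of `t`, so that words of different lengths give different points. -/
def wordPoint (n : ℕ) (t : Fin n → Bool) : ℕ → Bool :=
  fun k => if h : k < n then t ⟨k, h⟩ else decide (k = n)

theorem eq_of_wordPoint_eq {m n : ℕ} {s : Fin m → Bool} {t : Fin n → Bool}
    (h : wordPoint m s = wordPoint n t) : m = n := by
  by_contra hne
  wlog hlt : m < n generalizing m n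
  · exact this h.symm (Ne.symm hne) (by omega)
  have hn := congrFun h n
  simp [wordPoint, hlt.not_gt, hlt.ne'] at hn

theorem tendsto_wordPoint (x : ℕ → Bool) :
    Tendsto (fun n => wordPoint n fun i => x i) atTop (𝓝 x) := by
  refine tendsto_pi_nhds.2 fun k => tendsto_const_nhds.congr' ?_
  filter_upwards [eventually_gt_atTop k] with n hn
  simp [wordPoint, hn]

theorem dense_biUnion_range_wordPoint {I : Set ℕ} (hI : I.Infinite) :
    Dense (⋃ n ∈ I, Set.range (wordPoint n)) := fun x =>
  mem_closure_of_frequently_of_tendsto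
    ((Nat.frequently_atTop_iff_infinite.2 hI).mono fun _ hn => Set.mem_biUnion hn ⟨_, rfl⟩)
    (tendsto_wordPoint x)

end WordPoint

theorem exists_compactSpace_surjective_forall_dense {L Q : Type u} [TopologicalSpace L]
    [CompactSpace L] [TopologicalSpace Q] [T2Space Q] {q : L → Q} (hq : Continuous q)
    (hsurj : Function.Surjective q) :
    ∃ E : Set L, CompactSpace E ∧ Function.Surjective (E.domRestrict q) ∧
      ∀ S : Set E, Dense (E.domRestrict q '' S) → Dense S := by
  obtain ⟨E, hE, hEq, hmin⟩ := exists_compact_surjective_zorn_subset hq hsurj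
  refine ⟨E, hE, ?_, fun S hS => ?_⟩
  · rwa [← Set.range_eq_univ, Set.range_domRestrict]
  · by_contra hdense
    rw [dense_iff_closure_eq] at hdense
    refine hmin _ hdense isClosed_closure ?_
    have hclosed : IsClosed (E.domRestrict q '' closure S) :=
      (isClosed_closure.isCompact.image hq.continuousOn.domRestrict).isClosed
    rw [← hclosed.closure_eq]
    exact (hS.mono (Set.image_mono subset_closure)).closure_eq

theorem not_isAscoli_Cp_of_surjective {X : Type u} [TopologicalSpace X] [T35Space X] {K : Set X}
    (hK : IsCompact K) {q : K → ℕ → Bool} (hq : Continuous q) (hsurj : Function.Surjective q) :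
    ¬ IsAscoli (Cp X) := by
  classical
  intro h
  have := isCompact_iff_compactSpace.1 hK
  -- `ULift` puts the Cantor set in the universe of `X`, as the Zorn argument requires.
  obtain ⟨E, _, hE, hdense⟩ := exists_compactSpace_surjective_forall_dense
    (continuous_uliftUp.comp hq) (ULift.up_surjective.comp hsurj)
  have hqE : Function.Surjective (E.domRestrict q) := fun x =>
    (hE ⟨x⟩).imp fun z hz => congrArg ULift.down hz
  choose σ hσ using hqE
  have : Nonempty E := ⟨σ default⟩
  let F : ℕ → Finset X := fun n => Finset.univ.image fun t => (σ (wordPoint n t)).1.1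
  have hF : ∀ x, ∀ᶠ n in atTop, x ∉ F n := fun x => by
    rw [← Nat.cofinite_eq_atTop, eventually_cofinite]
    refine Set.Subsingleton.finite fun m hm n hn => ?_
    obtain ⟨s, -, hs⟩ := Finset.mem_image.1 (not_not.1 hm)
    obtain ⟨t, -, ht⟩ := Finset.mem_image.1 (not_not.1 hn)
    have hst : σ (wordPoint m s) = σ (wordPoint n t) :=
      Subtype.ext (Subtype.ext (hs.trans ht.symm))
    exact eq_of_wordPoint_eq ((Function.LeftInverse.injective hσ) hst)
  have hr : Continuous fun z : E => z.1.1 := by fun_prop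
  obtain ⟨I, hI, hnot⟩ := h.exists_infinite_not_dense hr hF
  refine hnot (hdense _ ?_)
  refine (ULift.up_surjective.denseRange.dense_image continuous_uliftUp
    (dense_biUnion_range_wordPoint hI)).mono ?_
  rintro _ ⟨_, hx, rfl⟩
  obtain ⟨n, hn, t, rfl⟩ := Set.mem_iUnion₂.1 hx
  exact ⟨σ (wordPoint n t),
    Set.mem_biUnion hn (Finset.mem_coe.2 (Finset.mem_image_of_mem _ (Finset.mem_univ t))),
    congrArg ULift.up (hσ _)⟩

theorem stmt14 {X : Type u} [TopologicalSpace X] [T35Space X] [LindelofSpace X]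
    (hcc : CechComplete X) :
    List.TFAE
      [IsAscoli (Cp X),
       FrechetUrysohnSpace (Cp X),
       IsScattered X,
       IsScattered X ∧ SigmaCompactSpace X] := by
  tfae_have 1 → 3 := fun h => by
    by_contra hns
    obtain ⟨K, hK, q, hq, hsurj⟩ := hcc.exists_isCompact_surjective_of_not_isScattered hns
    exact not_isAscoli_Cp_of_surjective hK hq hsurj h
  tfae_have 3 → 4 := fun hs => ⟨hs, hs.sigmaCompactSpace hcc⟩
  tfae_have 4 → 2 := fun ⟨hs, _⟩ => Cp.frechetUrysohnSpace hs
  tfae_have 2 → 1 := fun _ => isAscoli_of_compactlyGeneratedSpace _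
  tfae_finish
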